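/- The involution τ of ZMod 6 defined by τ(i) = i + 3, i.e., the Gauss diagram with chords {0,3},{1,4},{2,5}, is a fixed-point-free involution fixed by the Fox–Hatcher move ρ, and it is the UNIQUE fixed-point-free involution of ZMod 6 with ρ(σ) = σ. (This is the unique Gauss diagram constituting the Type III cycle.) -/

import Mathlib

/-- The set of Gauss diagrams: fixed-point-free involutions of `ZMod m`. -/
def gaussSet (m : ℕ) : Set (Equiv.Perm (ZMod m)) :=
  {σ | σ * σ = 1 ∧ ∀ i, σ i ≠ i}

/-- The Fox–Hatcher move on Gauss diagrams: conjugation `σ ↦ r ∘ σ ∘ r⁻¹` by the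
rotation `r : i ↦ i + 1` of `ZMod m`. -/
def fhMove (m : ℕ) (σ : Equiv.Perm (ZMod m)) : Equiv.Perm (ZMod m) :=
  (Equiv.addRight (1 : ZMod m)) * σ * (Equiv.addRight (1 : ZMod m))⁻¹

/-!
A permutation commuting with the rotation `i ↦ i + 1` is determined by its value at `0`, so it is
itself a rotation `i ↦ i + c`. Such a rotation is a fixed-point-free involution exactly when `c` has
order two, and the only element of order two in `ZMod (2 * n)` is `n`.
-/

theorem fhMove_eq_self_iff_map_add_one {m : ℕ} {σ : Equiv.Perm (ZMod m)} :
    fhMove m σ = σ ↔ ∀ i, σ (i + 1) = σ i + 1 := by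
  rw [fhMove, mul_inv_eq_iff_eq_mul, eq_comm, Equiv.ext_iff]
  rfl

theorem fhMove_eq_self_iff_exists_addRight {m : ℕ} {σ : Equiv.Perm (ZMod m)} :
    fhMove m σ = σ ↔ ∃ c, σ = Equiv.addRight c := by
  rw [fhMove_eq_self_iff_map_add_one]
  constructor
  · intro hσ
    let f : AddConstMap (ZMod m) (ZMod m) 1 1 := ⟨σ, hσ⟩
    refine ⟨σ 0, Equiv.ext <| ZMod.forall.mpr fun k ↦ ?_⟩
    calc σ k = σ (0 + k) := by rw [zero_add]
      _ = σ 0 + k := AddConstMapClass.map_add_int f 0 k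
      _ = k + σ 0 := add_comm _ _
  · rintro ⟨c, rfl⟩ i
    exact add_right_comm i 1 c

theorem addRight_mem_gaussSet_iff {m : ℕ} {c : ZMod m} :
    Equiv.addRight c ∈ gaussSet m ↔ c + c = 0 ∧ c ≠ 0 := by
  simp [gaussSet, Equiv.ext_iff, add_assoc]

theorem add_self_eq_zero_and_ne_zero_iff {n : ℕ} (hn : n ≠ 0) {c : ZMod (2 * n)} :
    c + c = 0 ∧ c ≠ 0 ↔ c = n := by
  have : NeZero (2 * n) := ⟨by lia⟩
  constructor
  · rintro ⟨add_self, ne_zero⟩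
    have two_mul_val : 2 * c.val = 2 * n :=
      ((ZMod.neg_eq_self_iff c).mp (neg_eq_of_add_eq_zero_left add_self)).resolve_left ne_zero
    rw [← ZMod.natCast_zmod_val c, Nat.eq_of_mul_eq_mul_left two_pos two_mul_val]
  · rintro rfl
    constructor
    · rw [← Nat.cast_add, ← two_mul, ZMod.natCast_self]
    · rw [Ne, ZMod.natCast_eq_zero_iff]
      exact Nat.not_dvd_of_pos_of_lt (by lia) (by lia)

theorem mem_gaussSet_and_fhMove_eq_self_iff {n : ℕ} (hn : n ≠ 0)
    {σ : Equiv.Perm (ZMod (2 * n))} :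
    σ ∈ gaussSet (2 * n) ∧ fhMove (2 * n) σ = σ ↔ σ = Equiv.addRight (n : ZMod (2 * n)) := by
  rw [fhMove_eq_self_iff_exists_addRight]
  constructor
  · rintro ⟨hσ, c, rfl⟩
    rw [(add_self_eq_zero_and_ne_zero_iff hn).mp (addRight_mem_gaussSet_iff.mp hσ)]
  · rintro rfl
    exact ⟨addRight_mem_gaussSet_iff.mpr <|
      (add_self_eq_zero_and_ne_zero_iff hn).mpr rfl, _, rfl⟩

/-- The diametral chord `{k, k + n}` of the `2 * n` points of `ZMod (2 * n)`, encoded as the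
transposition of its endpoints. -/
def diametralChord (n k : ℕ) : Equiv.Perm (ZMod (2 * n)) :=
  Equiv.swap (k : ZMod (2 * n)) (k + n)

theorem disjoint_diametralChord {n j k : ℕ} (hj : j < n) (hk : k < n) (hjk : j ≠ k) :
    (diametralChord n j).Disjoint (diametralChord n k) := by
  have cast_ne {a b : ℕ} (ha : a < 2 * n) (hb : b < 2 * n) (hab : a ≠ b) :
      (a : ZMod (2 * n)) ≠ b := (CharP.natCast_injOn_Iio _ _).ne ha hb hab
  apply Equiv.Perm.disjoint_swap_swap
  simp only [← Nat.cast_add, List.nodup_cons, List.mem_cons, List.not_mem_nil, or_false, not_or,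
    not_false_eq_true, List.nodup_nil, and_true]
  refine ⟨⟨?_, ?_, ?_⟩, ⟨?_, ?_⟩, ?_⟩ <;> apply cast_ne <;> lia

theorem exists_diametralChord_apply_eq_add {n : ℕ} (hn : n ≠ 0) (i : ZMod (2 * n)) :
    ∃ k < n, diametralChord n k i = i + n := by
  have : NeZero (2 * n) := ⟨by lia⟩
  obtain ⟨a, ha, rfl⟩ : ∃ a < 2 * n, (a : ZMod (2 * n)) = i :=
    ⟨i.val, i.val_lt, ZMod.natCast_zmod_val i⟩
  obtain h_lt | ⟨k, rfl⟩ := lt_or_ge a n |>.imp_right Nat.exists_eq_add_of_le'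
  · exact ⟨a, h_lt, Equiv.swap_apply_left _ _⟩
  · have half_add_half : (n + n : ZMod (2 * n)) = 0 :=
      ((add_self_eq_zero_and_ne_zero_iff hn).mpr rfl).1
    refine ⟨k, by lia, ?_⟩
    rw [Nat.cast_add, add_assoc, half_add_half, add_zero]
    exact Equiv.swap_apply_right _ _

theorem addRight_eq_prod_diametralChord {n : ℕ} (hn : n ≠ 0) :
    Equiv.addRight (n : ZMod (2 * n)) = ((List.range n).map (diametralChord n)).prod := by
  have : NeZero (2 * n) := ⟨by lia⟩
  have half_ne_zero : (n : ZMod (2 * n)) ≠ 0 :=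
    ((add_self_eq_zero_and_ne_zero_iff hn).mpr rfl).2
  have pairwise_disjoint :
      ((List.range n).map (diametralChord n)).Pairwise Equiv.Perm.Disjoint := by
    refine List.pairwise_map.mpr <| List.nodup_range.imp_of_mem fun hj hk hjk ↦ ?_
    exact disjoint_diametralChord (List.mem_range.mp hj) (List.mem_range.mp hk) hjk
  ext1 i
  obtain ⟨k, hk, chord_apply⟩ := exists_diametralChord_apply_eq_add hn i
  have mem_chords : diametralChord n k ∈ (List.range n).map (diametralChord n) :=
    List.mem_map_of_mem (List.mem_range.mpr hk)
  have mem_support : i ∈ (diametralChord n k).support := by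
    simpa [chord_apply] using half_ne_zero
  exact chord_apply.symm.trans <|
    Equiv.Perm.eq_on_support_mem_disjoint mem_chords pairwise_disjoint i mem_support

theorem typeIII_unique_fixed_point_general {n : ℕ} (hn : n ≠ 0) :
    Equiv.addRight (n : ZMod (2 * n)) = ((List.range n).map (diametralChord n)).prod ∧
    Equiv.addRight (n : ZMod (2 * n)) ∈ gaussSet (2 * n) ∧
    fhMove (2 * n) (Equiv.addRight (n : ZMod (2 * n))) = Equiv.addRight (n : ZMod (2 * n)) ∧
    (∀ σ ∈ gaussSet (2 * n), fhMove (2 * n) σ = σ →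
      σ = Equiv.addRight (n : ZMod (2 * n))) := by
  obtain ⟨mem_gaussSet, fhMove_eq⟩ := (mem_gaussSet_and_fhMove_eq_self_iff hn).mpr rfl
  exact ⟨addRight_eq_prod_diametralChord hn, mem_gaussSet, fhMove_eq,
    fun _ hσ hfix ↦ (mem_gaussSet_and_fhMove_eq_self_iff hn).mp ⟨hσ, hfix⟩⟩

/-- The involution `τ(i) = i + 3` of `ZMod 6`, i.e. the Gauss diagram with chords
`{0,3},{1,4},{2,5}`, is a fixed-point-free involution fixed by the Fox–Hatcher move,
and it is the unique such fixed point (the unique Gauss diagram of the Type III cycle). -/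
theorem typeIII_unique_fixed_point :
    (Equiv.addRight (3 : ZMod 6) : Equiv.Perm (ZMod 6)) =
      Equiv.swap 0 3 * Equiv.swap 1 4 * Equiv.swap 2 5 ∧
    (Equiv.addRight (3 : ZMod 6) : Equiv.Perm (ZMod 6)) ∈ gaussSet 6 ∧
    fhMove 6 (Equiv.addRight (3 : ZMod 6)) = Equiv.addRight (3 : ZMod 6) ∧
    (∀ σ ∈ gaussSet 6, fhMove 6 σ = σ → σ = Equiv.addRight (3 : ZMod 6)) :=
  typeIII_unique_fixed_point_general (n := 3) three_ne_zero
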